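/- Let 1 ≤ p < ∞ be real, let μ be real with μ > (n−1) − n/p − 1/p′, and set ν = μ − (n−2)/p′ and c₁ = (Γ((n−1)/2)/Γ(1/2)) · Γ((μ + n/p − (n−1) + 1/p′)/2) / Γ((μ + n/p − 1/p)/2). Then for every measurable φ : S^{n-1} → [0,∞], ( ∫_{S^{n-1}} ( (Fφ)(w) )^p |w_n|^{νp} (1 − w_n²)^{((1−ν)p − n)/2} d*w )^{1/p} ≤ c₁ · ( ∫_{S^{n-1}} φ(θ)^p (1 − θ_n²)^{μp/2} |θ_n|^{(n−1−μ)p − n} d*θ )^{1/p}, with c₁ the sharp constant. (Case k = n−1 of the paper's weighted norm inequality for the Funk-type transform F_k, obtained from the weighted k-plane transform estimate by stereographic projection; here sin d(w^⊥) = |w_n| and cos d(w^⊥) = (1 − w_n²)^{1/2}.) -/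

import Mathlib

open MeasureTheory Metric Real
open scoped ENNReal NNReal

noncomputable section

/-- The normalized (probability) surface measure `d*θ` on the unit sphere of
`EuclideanSpace ℝ (Fin n)`. -/
def sphMeasure (n : ℕ) : Measure (sphere (0 : EuclideanSpace ℝ (Fin n)) 1) :=
  ((volume : Measure (EuclideanSpace ℝ (Fin n))).toSphere Set.univ)⁻¹ •
    (volume : Measure (EuclideanSpace ℝ (Fin n))).toSphere

/-- The hyperplane Radon transform: `Rf(θ,t) = ∫_{θ^⊥} f(tθ + y) dy`, where `θ^⊥` carries its
canonical Lebesgue measure as an (n-1)-dimensional inner product space. -/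
def Radon (n : ℕ) (f : EuclideanSpace ℝ (Fin n) → ℝ≥0∞)
    (θ : sphere (0 : EuclideanSpace ℝ (Fin n)) 1) (t : ℝ) : ℝ≥0∞ :=
  ∫⁻ y : ((ℝ ∙ (θ : EuclideanSpace ℝ (Fin n)))ᗮ),
    f (t • (θ : EuclideanSpace ℝ (Fin n)) + (y : EuclideanSpace ℝ (Fin n)))

/-- The codimension-one Funk transform: the average of `φ` over the great subsphere
`S^{n-1} ∩ w^⊥` (the unit sphere of the subspace `w^⊥`, with its normalized surface
measure). -/
def Funk (n : ℕ) (φ : sphere (0 : EuclideanSpace ℝ (Fin n)) 1 → ℝ≥0∞)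
    (w : sphere (0 : EuclideanSpace ℝ (Fin n)) 1) : ℝ≥0∞ :=
  ((volume : Measure ((ℝ ∙ (w : EuclideanSpace ℝ (Fin n)))ᗮ)).toSphere Set.univ)⁻¹ *
    ∫⁻ v : sphere (0 : ((ℝ ∙ (w : EuclideanSpace ℝ (Fin n)))ᗮ)) 1,
      φ ⟨((v : ((ℝ ∙ (w : EuclideanSpace ℝ (Fin n)))ᗮ)) : EuclideanSpace ℝ (Fin n)), by
          have hv := v.2
          simp only [mem_sphere_iff_norm, sub_zero] at hv ⊢
          rwa [Submodule.coe_norm] at hv⟩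
      ∂((volume : Measure ((ℝ ∙ (w : EuclideanSpace ℝ (Fin n)))ᗮ)).toSphere)

/-!
The inequality is a Schur test. For a unit vector `e` of an `(m + 1)`-dimensional space and
`t = ⟨θ, e⟩`, the function `v(θ) = |t|^a (1 - t²)^{-(a + m)/2}` satisfies `F v = C u` with
`u(w) = |t|^{-(a + 1)} (1 - t²)^{a/2}` and `C` the asserted constant: along `w^⊥` the function `v`
depends on the projection `e'` of `e` only, and its average is found by integrating
`|⟨x, e'⟩|^a exp(⟨x, e'⟩² - ‖x‖²)` once in polar coordinates and once along and across `e'`.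
Hölder's inequality on each great subsphere gives `(F φ)^p ≤ F(φ^p v^{1 - p}) (C u)^{p - 1}`, and
since `F` is self-adjoint, integrating this against `u^{1 - p} v` gives the estimate with constant
`C`. Self-adjointness comes from averaging over the orthogonal group, where a reflection exchanges
any two orthonormal vectors. For sharpness, `v` is not admissible itself, but perturbing its
exponents by `ε > 0` makes both sides finite multiples of the same integral, and `ε → 0`.
-/

section InnerProductGeometry

variable {E : Type*} [NormedAddCommGroup E] [InnerProductSpace ℝ E]

theorem norm_add_smul_sq_of_mem_orthogonal {w : E} (hw : ‖w‖ = 1) (y : (ℝ ∙ w)ᗮ) (s : ℝ) :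
    ‖(y : E) + s • w‖ ^ 2 = ‖y‖ ^ 2 + s ^ 2 := by
  rw [norm_add_sq_real, inner_smul_right, Submodule.mem_orthogonal_singleton_iff_inner_left.1 y.2,
    norm_smul, hw]
  simp

theorem inner_add_smul_of_mem_orthogonal {w : E} (hw : ‖w‖ = 1) (y : (ℝ ∙ w)ᗮ) (s : ℝ) :
    inner ℝ ((y : E) + s • w) w = s := by
  rw [inner_add_left, Submodule.mem_orthogonal_singleton_iff_inner_left.1 y.2, real_inner_smul_left,
    real_inner_self_eq_norm_sq, hw]
  ring

theorem exists_unit_smul_eq [Nontrivial E] (u : E) : ∃ ω : E, ‖ω‖ = 1 ∧ ‖u‖ • ω = u := by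
  rcases eq_or_ne u 0 with rfl | hu
  · obtain ⟨ω, hω⟩ := exists_norm_eq E zero_le_one
    exact ⟨ω, hω, by simp⟩
  · exact ⟨‖u‖⁻¹ • u, norm_smul_inv_norm hu, smul_inv_smul₀ (norm_ne_zero_iff.2 hu) u⟩

theorem abs_inner_sphere_lt_one {u : E} (hu : ‖u‖ < 1) (v : sphere (0 : E) 1) :
    |inner ℝ (v : E) u| < 1 :=
  calc |inner ℝ (v : E) u| ≤ ‖(v : E)‖ * ‖u‖ := abs_real_inner_le_norm _ _
    _ < 1 := by rwa [norm_eq_of_mem_sphere v, one_mul]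

theorem finrank_orthogonal_add_one [FiniteDimensional ℝ E] {w : E} (hw : ‖w‖ = 1) :
    Module.finrank ℝ (ℝ ∙ w)ᗮ + 1 = Module.finrank ℝ E := by
  rw [add_comm, ← (ℝ ∙ w).finrank_add_finrank_orthogonal,
    finrank_span_singleton (norm_ne_zero_iff.1 (by simp [hw]))]

theorem nontrivial_orthogonal [FiniteDimensional ℝ E] (hE : 2 ≤ Module.finrank ℝ E) {w : E}
    (hw : ‖w‖ = 1) : Nontrivial (ℝ ∙ w)ᗮ := by
  have hrank := finrank_orthogonal_add_one hw
  exact Module.nontrivial_of_finrank_pos (R := ℝ) (by lia)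

end InnerProductGeometry

section GaussianIntegrals

open Set Module

theorem lintegral_Ioi_rpow_mul_exp_neg_mul_sq {b q : ℝ} (hb : 0 < b) (hq : -1 < q) :
    ∫⁻ r in Ioi (0 : ℝ), ENNReal.ofReal (r ^ q * exp (-b * r ^ 2)) =
      ENNReal.ofReal (b ^ (-(q + 1) / 2) * (Gamma ((q + 1) / 2) / 2)) := by
  rw [← ofReal_integral_eq_lintegral_ofReal (integrableOn_rpow_mul_exp_neg_mul_sq hb hq)]
  · simp only [← rpow_two, integral_rpow_mul_exp_neg_mul_rpow two_pos hq hb, mul_assoc]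
    congr 2
    ring
  · filter_upwards [ae_restrict_mem measurableSet_Ioi] with r (hr : 0 < r)
    positivity

theorem lintegral_comp_abs_eq_two_mul {f : ℝ → ℝ≥0∞} (hf : Measurable f) :
    ∫⁻ s : ℝ, f |s| = 2 * ∫⁻ s in Ioi (0 : ℝ), f s := by
  have hpos : ∫⁻ s in Ioi (0 : ℝ), f |s| = ∫⁻ s in Ioi (0 : ℝ), f s :=
    setLIntegral_congr_fun measurableSet_Ioi fun s (hs : 0 < s) => by rw [abs_of_pos hs]
  have hneg : ∫⁻ s in Iio (0 : ℝ), f |s| = ∫⁻ s in Ioi (0 : ℝ), f |s| := by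
    rw [← (Measure.measurePreserving_neg (volume : Measure ℝ)).setLIntegral_comp_preimage
      measurableSet_Iio (by fun_prop)]
    simp
  rw [← lintegral_add_compl _ (measurableSet_Ioi (a := (0 : ℝ))), compl_Ioi,
    ← restrict_Iio_eq_restrict_Iic, hneg, hpos, two_mul]

theorem lintegral_abs_rpow_mul_exp_neg_mul_sq {a b : ℝ} (ha : -1 < a) (hb : 0 < b) :
    ∫⁻ s : ℝ, ENNReal.ofReal |s| ^ a * ENNReal.ofReal (exp (-b * s ^ 2)) =
      ENNReal.ofReal (b ^ (-(a + 1) / 2) * Gamma ((a + 1) / 2)) := by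
  have heven := lintegral_comp_abs_eq_two_mul
    (f := fun s => ENNReal.ofReal s ^ a * ENNReal.ofReal (exp (-b * s ^ 2))) (by fun_prop)
  have hhalf : ∫⁻ s in Ioi (0 : ℝ), ENNReal.ofReal s ^ a * ENNReal.ofReal (exp (-b * s ^ 2)) =
      ENNReal.ofReal (b ^ (-(a + 1) / 2) * (Gamma ((a + 1) / 2) / 2)) := by
    rw [← lintegral_Ioi_rpow_mul_exp_neg_mul_sq hb ha]
    refine setLIntegral_congr_fun measurableSet_Ioi fun s (hs : 0 < s) => ?_
    rw [ENNReal.ofReal_rpow_of_pos hs, ← ENNReal.ofReal_mul (by positivity)]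
  simp only [sq_abs] at heven
  rw [heven, hhalf, ← ENNReal.ofReal_ofNat 2, ← ENNReal.ofReal_mul zero_le_two]
  congr 1
  ring

variable {E : Type*} [NormedAddCommGroup E] [InnerProductSpace ℝ E] [FiniteDimensional ℝ E]
  [MeasurableSpace E] [BorelSpace E]

theorem lintegral_exp_neg_norm_sq :
    ∫⁻ x : E, ENNReal.ofReal (exp (-‖x‖ ^ 2)) = ENNReal.ofReal (π ^ ((finrank ℝ E : ℝ) / 2)) := by
  have hint := GaussianFourier.integral_rexp_neg_mul_sq_norm (V := E) one_pos
  simp only [neg_mul, one_mul, div_one] at hint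
  have hne : ∫ x : E, exp (-‖x‖ ^ 2) ≠ 0 := by rw [hint]; positivity
  rw [← ofReal_integral_eq_lintegral_ofReal (.of_integral_ne_zero hne)
    (.of_forall fun x => (exp_pos _).le), hint]

theorem lintegral_eq_lintegral_toSphere [Nontrivial E] {f : E → ℝ≥0∞} (hf : Measurable f) :
    ∫⁻ x, f x = ∫⁻ v : sphere (0 : E) 1, (∫⁻ r in Ioi (0 : ℝ),
      ENNReal.ofReal (r ^ (finrank ℝ E - 1)) * f (r • (v : E))) ∂(volume : Measure E).toSphere := by
  have hpolar := (volume : Measure E).measurePreserving_homeomorphUnitSphereProd.lintegral_comp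
    (f := fun q => f (q.2.1 • (q.1 : E))) (by fun_prop)
  have hinv (x : ({0}ᶜ : Set E)) : (homeomorphUnitSphereProd E x).2.1 •
      ((homeomorphUnitSphereProd E x).1 : E) = x := by
    rw [← homeomorphUnitSphereProd_symm_apply_coe, Homeomorph.symm_apply_apply]
  simp only [hinv] at hpolar
  have hpunctured : ∫⁻ x, f x = ∫⁻ x : ({0}ᶜ : Set E), f x ∂(volume : Measure E).comap (↑) := by
    rw [lintegral_subtype_comap (measurableSet_singleton _).compl, restrict_compl_singleton]
  rw [hpunctured, hpolar, lintegral_prod _ (by fun_prop)]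
  refine lintegral_congr fun v => ?_
  rw [Measure.volumeIoiPow, lintegral_withDensity_eq_lintegral_mul _ (by fun_prop) (by fun_prop),
    ← lintegral_subtype_comap measurableSet_Ioi]
  rfl

theorem lintegral_eq_lintegral_orthogonal (w : E) (hw : ‖w‖ = 1) {f : E → ℝ≥0∞}
    (hf : Measurable f) : ∫⁻ x, f x = ∫⁻ u : (ℝ ∙ w)ᗮ, ∫⁻ s : ℝ, f (u + s • w) := by
  let decomposition := (ℝ ∙ w).orthogonalDecomposition
  calc ∫⁻ x, f x = ∫⁻ y, f (decomposition.symm y) :=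
        (decomposition.symm.measurePreserving.lintegral_comp hf).symm
    _ = ∫⁻ y, f (decomposition.symm (WithLp.toLp 2 y)) :=
        ((WithLp.volume_preserving_toLp (ℝ ∙ w) (ℝ ∙ w)ᗮ).lintegral_comp (by fun_prop)).symm
    _ = ∫⁻ u : (ℝ ∙ w)ᗮ, ∫⁻ k : (ℝ ∙ w), f (decomposition.symm (WithLp.toLp 2 (k, u))) := by
        rw [Measure.volume_eq_prod, lintegral_prod_symm _ (by fun_prop)]
    _ = ∫⁻ u : (ℝ ∙ w)ᗮ, ∫⁻ s : ℝ, f (u + s • w) := by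
        refine lintegral_congr fun u => ?_
        rw [← (LinearIsometryEquiv.toSpanUnitSingleton w hw).measurePreserving.lintegral_comp
          (by fun_prop)]
        refine lintegral_congr fun s => congrArg f ?_
        rw [add_comm]
        rfl

theorem lintegral_of_homogeneous_gaussian [Nontrivial E] {f : E → ℝ≥0∞} (hf : Measurable f)
    {Φ : sphere (0 : E) 1 → ℝ≥0∞} {Q : sphere (0 : E) 1 → ℝ} (hQ : ∀ v, 0 < Q v) {β : ℝ}
    (hβ : 0 < β + finrank ℝ E)
    (h : ∀ v : sphere (0 : E) 1, ∀ r : ℝ, 0 < r →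
      f (r • (v : E)) = Φ v * ENNReal.ofReal (r ^ β * exp (-Q v * r ^ 2))) :
    ∫⁻ x, f x = (∫⁻ v, Φ v * ENNReal.ofReal (Q v) ^ (-(β + finrank ℝ E) / 2)
      ∂(volume : Measure E).toSphere) * ENNReal.ofReal (Gamma ((β + finrank ℝ E) / 2) / 2) := by
  rw [lintegral_eq_lintegral_toSphere hf, ← lintegral_mul_const' _ _ ENNReal.ofReal_ne_top]
  refine lintegral_congr fun v => ?_
  have hdim : β + ((finrank ℝ E - 1 : ℕ) : ℝ) + 1 = β + finrank ℝ E := by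
    rw [Nat.cast_pred finrank_pos]; ring
  have hradial := lintegral_Ioi_rpow_mul_exp_neg_mul_sq (hQ v)
    (show -1 < β + ((finrank ℝ E - 1 : ℕ) : ℝ) by linarith)
  rw [hdim, ENNReal.ofReal_mul (rpow_nonneg (hQ v).le _), ← ENNReal.ofReal_rpow_of_pos (hQ v)]
    at hradial
  rw [mul_assoc, ← hradial, ← lintegral_const_mul _ (by fun_prop)]
  refine setLIntegral_congr_fun measurableSet_Ioi fun r (hr : 0 < r) => ?_
  rw [h v r hr, rpow_add hr, rpow_natCast, mul_left_comm, ← ENNReal.ofReal_mul (by positivity)]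
  congr 2
  ring

end GaussianIntegrals

section SphericalMoments

open Set Module

variable {E : Type*} [NormedAddCommGroup E] [InnerProductSpace ℝ E] [FiniteDimensional ℝ E]
  [MeasurableSpace E] [BorelSpace E]

variable (E) in
/-- The uniform probability measure on the unit sphere of `E`; it is the zero measure when `E` is
trivial. -/
def sphereUniform : Measure (sphere (0 : E) 1) :=
  ((volume : Measure E).toSphere univ)⁻¹ • (volume : Measure E).toSphere

instance sFinite_sphereUniform : SFinite (sphereUniform E) := by
  unfold sphereUniform
  infer_instance

instance isProbabilityMeasure_sphereUniform [Nontrivial E] :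
    IsProbabilityMeasure (sphereUniform E) := by
  have : NeZero (volume : Measure E).toSphere := ⟨Measure.toSphere_ne_zero _⟩
  exact isProbabilityMeasureSMul

/-- The weight `|t|^α (1 - t²)^{β/2}` in the height `t = ⟨θ, u⟩` of `θ` along `u`. For a unit vector
`u`, the two factors are powers of the sine and the cosine of the distance from `θ` to `u^⊥`. -/
def zonalPower (u : E) (α β : ℝ) (θ : sphere (0 : E) 1) : ℝ≥0∞ :=
  ENNReal.ofReal |inner ℝ (θ : E) u| ^ α * ENNReal.ofReal (1 - inner ℝ (θ : E) u ^ 2) ^ (β / 2)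

@[fun_prop]
theorem measurable_zonalPower (u : E) (α β : ℝ) : Measurable (zonalPower u α β) := by
  unfold zonalPower
  fun_prop

/-- The factor by which averaging over great subspheres of dimension `m - 1` multiplies the
homogeneous weight `zonalPower e a (-(a + m))`; it is the sharp constant of the inequality. -/
def funkConst (m a : ℝ) : ℝ :=
  Gamma (m / 2) / Gamma (1 / 2) * Gamma ((a + 1) / 2) / Gamma ((a + m) / 2)

theorem funkConst_pos {m a : ℝ} (hm : 1 ≤ m) (ha : -1 < a) : 0 < funkConst m a := by
  have hbase : 0 < Gamma (m / 2) := Gamma_pos_of_pos (by linarith)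
  have hnum : 0 < Gamma ((a + 1) / 2) := Gamma_pos_of_pos (by linarith)
  have hden : 0 < Gamma ((a + m) / 2) := Gamma_pos_of_pos (by linarith)
  have hhalf : 0 < Gamma (1 / 2) := Gamma_pos_of_pos one_half_pos
  unfold funkConst
  positivity

theorem continuousAt_funkConst {m a : ℝ} (hm : 1 ≤ m) (ha : -1 < a) :
    ContinuousAt (funkConst m) a := by
  have hGamma {x : ℝ} (hx : 0 < x) : ContinuousAt Gamma x :=
    (differentiableOn_Gamma_Ioi.continuousOn).continuousAt (Ioi_mem_nhds hx)
  refine ContinuousAt.div (continuousAt_const.mul ?_) ?_ (Gamma_pos_of_pos (by linarith)).ne'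
  · exact (hGamma (by linarith)).comp (f := fun a => (a + 1) / 2) (by fun_prop)
  · exact (hGamma (by linarith)).comp (f := fun a => (a + m) / 2) (by fun_prop)

theorem toSphere_univ_mul_Gamma [Nontrivial E] :
    (volume : Measure E).toSphere univ * ENNReal.ofReal (Gamma ((finrank ℝ E : ℝ) / 2) / 2) =
      ENNReal.ofReal (π ^ ((finrank ℝ E : ℝ) / 2)) := by
  have hpolar := lintegral_of_homogeneous_gaussian (E := E)
    (f := fun x => ENNReal.ofReal (exp (-‖x‖ ^ 2))) (by fun_prop) (Φ := 1) (Q := 1)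
    (fun _ => one_pos) (β := 0) (by simpa using finrank_pos (R := ℝ) (M := E))
    fun v r _ => by simp [norm_smul]
  simpa [lintegral_exp_neg_norm_sq] using hpolar.symm

theorem ofReal_abs_mul_rpow {r : ℝ} (hr : 0 < r) (c a : ℝ) :
    ENNReal.ofReal |r * c| ^ a = ENNReal.ofReal |c| ^ a * ENNReal.ofReal (r ^ a) := by
  rw [abs_mul, abs_of_pos hr, ENNReal.ofReal_mul hr.le, ENNReal.mul_rpow_of_ne_top
    ENNReal.ofReal_ne_top ENNReal.ofReal_ne_top, ENNReal.ofReal_rpow_of_pos hr, mul_comm]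

theorem lintegral_abs_inner_rpow_mul_exp [Nontrivial E] {u : E} (hu : ‖u‖ < 1) {a : ℝ}
    (ha : -1 < a) :
    ∫⁻ x : E, ENNReal.ofReal |inner ℝ x u| ^ a *
        ENNReal.ofReal (exp (-(‖x‖ ^ 2 - inner ℝ x u ^ 2))) =
      ENNReal.ofReal (π ^ (((finrank ℝ E : ℝ) - 1) / 2) * Gamma ((a + 1) / 2)) *
        (ENNReal.ofReal ‖u‖ ^ a * ENNReal.ofReal (1 - ‖u‖ ^ 2) ^ (-(a + 1) / 2)) := by
  obtain ⟨ω, hω, huω⟩ := exists_unit_smul_eq u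
  have hwidth : 0 < 1 - ‖u‖ ^ 2 := by nlinarith [norm_nonneg u]
  have hsplit (y : (ℝ ∙ ω)ᗮ) (s : ℝ) :
      ENNReal.ofReal |inner ℝ ((y : E) + s • ω) u| ^ a *
          ENNReal.ofReal (exp (-(‖(y : E) + s • ω‖ ^ 2 - inner ℝ ((y : E) + s • ω) u ^ 2))) =
        ENNReal.ofReal (exp (-‖y‖ ^ 2)) * (ENNReal.ofReal ‖u‖ ^ a *
          (ENNReal.ofReal |s| ^ a * ENNReal.ofReal (exp (-(1 - ‖u‖ ^ 2) * s ^ 2)))) := by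
    have hinner : inner ℝ ((y : E) + s • ω) u = ‖u‖ * s := by
      nth_rw 1 [← huω]
      rw [inner_smul_right, inner_add_smul_of_mem_orthogonal hω]
    rw [hinner, norm_add_smul_sq_of_mem_orthogonal hω, abs_mul, abs_norm,
      ENNReal.ofReal_mul (norm_nonneg u),
      ENNReal.mul_rpow_of_ne_top ENNReal.ofReal_ne_top ENNReal.ofReal_ne_top,
      show -(‖y‖ ^ 2 + s ^ 2 - (‖u‖ * s) ^ 2) = -‖y‖ ^ 2 + -(1 - ‖u‖ ^ 2) * s ^ 2 by ring,
      exp_add, ENNReal.ofReal_mul (exp_pos _).le]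
    ring
  rw [lintegral_eq_lintegral_orthogonal ω hω (by fun_prop)]
  simp only [hsplit]
  simp_rw [lintegral_const_mul _ (show Measurable fun s : ℝ => ENNReal.ofReal ‖u‖ ^ a *
      (ENNReal.ofReal |s| ^ a * ENNReal.ofReal (exp (-(1 - ‖u‖ ^ 2) * s ^ 2))) by fun_prop),
    lintegral_const_mul _ (show Measurable fun s : ℝ =>
      ENNReal.ofReal |s| ^ a * ENNReal.ofReal (exp (-(1 - ‖u‖ ^ 2) * s ^ 2)) by fun_prop)]
  rw [lintegral_abs_rpow_mul_exp_neg_mul_sq ha hwidth, lintegral_mul_const _ (by fun_prop),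
    lintegral_exp_neg_norm_sq, ENNReal.ofReal_rpow_of_pos hwidth,
    ENNReal.ofReal_mul (q := Gamma _) (by positivity),
    ENNReal.ofReal_mul (q := Gamma _) (by positivity), ← finrank_orthogonal_add_one hω]
  push_cast
  ring_nf

theorem lintegral_zonalPower_toSphere [Nontrivial E] {u : E} (hu : ‖u‖ < 1) {a : ℝ} (ha : -1 < a) :
    (∫⁻ v, zonalPower u a (-(a + finrank ℝ E)) v ∂(volume : Measure E).toSphere) *
        ENNReal.ofReal (Gamma ((a + finrank ℝ E) / 2) / 2) =
      ENNReal.ofReal (π ^ (((finrank ℝ E : ℝ) - 1) / 2) * Gamma ((a + 1) / 2)) *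
        (ENNReal.ofReal ‖u‖ ^ a * ENNReal.ofReal (1 - ‖u‖ ^ 2) ^ (-(a + 1) / 2)) := by
  have hrank : (1 : ℝ) ≤ finrank ℝ E := by exact_mod_cast finrank_pos (R := ℝ) (M := E)
  rw [← lintegral_abs_inner_rpow_mul_exp hu ha]
  refine (lintegral_of_homogeneous_gaussian (by fun_prop) (fun v => ?_) (by linarith)
    fun v r hr => ?_).symm
  · exact sub_pos.2 ((sq_lt_one_iff_abs_lt_one _).2 (abs_inner_sphere_lt_one hu v))
  · rw [real_inner_smul_left, ofReal_abs_mul_rpow hr, norm_smul, norm_eq_of_mem_sphere v,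
      norm_of_nonneg hr.le, ENNReal.ofReal_mul (by positivity), mul_assoc]
    ring_nf

theorem funkConst_mul_Gamma {d a : ℝ} (hd : 1 ≤ d) (ha : -1 < a) :
    funkConst d a * (Gamma ((a + d) / 2) / 2) * π ^ (d / 2) =
      π ^ ((d - 1) / 2) * Gamma ((a + 1) / 2) * (Gamma (d / 2) / 2) := by
  have hden : Gamma ((a + d) / 2) ≠ 0 := (Gamma_pos_of_pos (by linarith)).ne'
  have hpi : π ^ (d / 2) = π ^ ((d - 1) / 2) * √π := by
    rw [sqrt_eq_rpow, ← rpow_add pi_pos]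
    ring_nf
  rw [hpi, funkConst, Gamma_one_half_eq]
  field_simp

theorem lintegral_zonalPower_of_norm_lt_one [Nontrivial E] {u : E} (hu : ‖u‖ < 1) {a : ℝ}
    (ha : -1 < a) :
    ∫⁻ v, zonalPower u a (-(a + finrank ℝ E)) v ∂sphereUniform E =
      ENNReal.ofReal (funkConst (finrank ℝ E) a) *
        (ENNReal.ofReal ‖u‖ ^ a * ENNReal.ofReal (1 - ‖u‖ ^ 2) ^ (-(a + 1) / 2)) := by
  have hd : (1 : ℝ) ≤ finrank ℝ E := by exact_mod_cast finrank_pos (R := ℝ) (M := E)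
  have hbase : 0 < Gamma ((finrank ℝ E : ℝ) / 2) := Gamma_pos_of_pos (by linarith)
  have hden : 0 < Gamma ((a + finrank ℝ E) / 2) := Gamma_pos_of_pos (by linarith)
  have hconst := funkConst_pos hd ha
  have hmass_ne_zero : (volume : Measure E).toSphere univ ≠ 0 :=
    Measure.measure_univ_ne_zero.2 (Measure.toSphere_ne_zero _)
  set W := ENNReal.ofReal ‖u‖ ^ a * ENNReal.ofReal (1 - ‖u‖ ^ 2) ^ (-(a + 1) / 2)
  suffices hscaled : ∫⁻ v, zonalPower u a (-(a + finrank ℝ E)) v ∂(volume : Measure E).toSphere =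
      (volume : Measure E).toSphere univ * (ENNReal.ofReal (funkConst (finrank ℝ E) a) * W) by
    rw [sphereUniform, lintegral_smul_measure, smul_eq_mul, hscaled,
      ENNReal.inv_mul_cancel_left hmass_ne_zero (measure_ne_top _ _)]
  rw [← ENNReal.mul_left_inj (c := ENNReal.ofReal (Gamma ((a + finrank ℝ E) / 2) / 2) *
      ENNReal.ofReal (Gamma ((finrank ℝ E : ℝ) / 2) / 2)) (by positivity) (by finiteness)]
  have hreal : ENNReal.ofReal (π ^ (((finrank ℝ E : ℝ) - 1) / 2) * Gamma ((a + 1) / 2)) *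
        ENNReal.ofReal (Gamma ((finrank ℝ E : ℝ) / 2) / 2) =
      ENNReal.ofReal (funkConst (finrank ℝ E) a) *
        ENNReal.ofReal (Gamma ((a + finrank ℝ E) / 2) / 2) *
          ENNReal.ofReal (π ^ ((finrank ℝ E : ℝ) / 2)) := by
    rw [← ENNReal.ofReal_mul' (by positivity), ← ENNReal.ofReal_mul hconst.le,
      ← ENNReal.ofReal_mul (by positivity), funkConst_mul_Gamma hd ha]
  rw [← mul_assoc, lintegral_zonalPower_toSphere hu ha, mul_right_comm, hreal,
    ← toSphere_univ_mul_Gamma]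
  ring

theorem ofReal_sq_mul_rpow_half {r : ℝ} (hr : 0 < r) (c β : ℝ) :
    ENNReal.ofReal (r ^ 2 * c) ^ (β / 2) =
      ENNReal.ofReal c ^ (β / 2) * ENNReal.ofReal (r ^ β) := by
  rw [← rpow_two, ENNReal.ofReal_mul (by positivity),
    ENNReal.mul_rpow_of_ne_top ENNReal.ofReal_ne_top ENNReal.ofReal_ne_top,
    ENNReal.ofReal_rpow_of_pos (p := β / 2) (by positivity), ← rpow_mul hr.le,
    mul_div_cancel₀ _ two_ne_zero, mul_comm]

theorem lintegral_norm_sq_rpow_mul_exp [Nontrivial E] {β : ℝ} (hβ : 0 < β + finrank ℝ E) :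
    ∫⁻ x : E, ENNReal.ofReal (‖x‖ ^ 2) ^ (β / 2) * ENNReal.ofReal (exp (-‖x‖ ^ 2)) =
      (volume : Measure E).toSphere univ *
        ENNReal.ofReal (Gamma ((β + finrank ℝ E) / 2) / 2) := by
  rw [lintegral_of_homogeneous_gaussian (by fun_prop) (Φ := 1) (Q := 1) (fun _ => one_pos) hβ
    fun v r hr => ?_]
  · simp
  · have hscale := ofReal_sq_mul_rpow_half hr 1 β
    rw [norm_smul, norm_eq_of_mem_sphere v, norm_of_nonneg hr.le,
      ENNReal.ofReal_mul (by positivity)]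
    simpa using congrArg (· * ENNReal.ofReal (exp (-r ^ 2))) hscale

theorem lintegral_abs_inner_rpow_mul_exp_eq_zonalPower [Nontrivial E] (e : E) {α β : ℝ}
    (hαβ : 0 < α + β + finrank ℝ E) :
    ∫⁻ x : E, ENNReal.ofReal |inner ℝ x e| ^ α *
        ENNReal.ofReal (‖x‖ ^ 2 - inner ℝ x e ^ 2) ^ (β / 2) * ENNReal.ofReal (exp (-‖x‖ ^ 2)) =
      (∫⁻ θ, zonalPower e α β θ ∂(volume : Measure E).toSphere) *
        ENNReal.ofReal (Gamma ((α + β + finrank ℝ E) / 2) / 2) := by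
  rw [lintegral_of_homogeneous_gaussian (by fun_prop) (Φ := zonalPower e α β) (Q := 1)
    (fun _ => one_pos) hαβ fun v r hr => ?_]
  · simp
  · have hheight : (r * 1) ^ 2 - (r * inner ℝ (v : E) e) ^ 2 =
        r ^ 2 * (1 - inner ℝ (v : E) e ^ 2) := by ring
    rw [real_inner_smul_left, norm_smul, norm_eq_of_mem_sphere v, norm_of_nonneg hr.le, hheight,
      ofReal_sq_mul_rpow_half hr, ofReal_abs_mul_rpow hr, rpow_add hr,
      ENNReal.ofReal_mul (by positivity), ENNReal.ofReal_mul (by positivity), zonalPower]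
    simp only [mul_one, Pi.one_apply, neg_mul, one_mul]
    ring

theorem lintegral_abs_inner_rpow_mul_exp_eq_orthogonal {e : E} (he : ‖e‖ = 1) {α : ℝ}
    (hα : -1 < α) (β : ℝ) :
    ∫⁻ x : E, ENNReal.ofReal |inner ℝ x e| ^ α *
        ENNReal.ofReal (‖x‖ ^ 2 - inner ℝ x e ^ 2) ^ (β / 2) * ENNReal.ofReal (exp (-‖x‖ ^ 2)) =
      (∫⁻ y : (ℝ ∙ e)ᗮ, ENNReal.ofReal (‖y‖ ^ 2) ^ (β / 2) * ENNReal.ofReal (exp (-‖y‖ ^ 2))) *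
        ENNReal.ofReal (Gamma ((α + 1) / 2)) := by
  have hfactor (y : (ℝ ∙ e)ᗮ) (s : ℝ) : ENNReal.ofReal |s| ^ α *
        ENNReal.ofReal (‖y‖ ^ 2) ^ (β / 2) * ENNReal.ofReal (exp (-(‖y‖ ^ 2 + s ^ 2))) =
      ENNReal.ofReal (‖y‖ ^ 2) ^ (β / 2) * ENNReal.ofReal (exp (-‖y‖ ^ 2)) *
        (ENNReal.ofReal |s| ^ α * ENNReal.ofReal (exp (-1 * s ^ 2))) := by
    rw [neg_add, exp_add, ENNReal.ofReal_mul (exp_pos _).le, neg_one_mul]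
    ring
  rw [lintegral_eq_lintegral_orthogonal e he (by fun_prop)]
  simp only [inner_add_smul_of_mem_orthogonal he, norm_add_smul_sq_of_mem_orthogonal he,
    add_sub_cancel_right, hfactor]
  simp_rw [lintegral_const_mul _ (show Measurable fun s : ℝ =>
    ENNReal.ofReal |s| ^ α * ENNReal.ofReal (exp (-1 * s ^ 2)) by fun_prop)]
  rw [lintegral_abs_rpow_mul_exp_neg_mul_sq hα one_pos, one_rpow, one_mul,
    lintegral_mul_const _ (by fun_prop)]

theorem lintegral_zonalPower_ne_zero_and_ne_top (hE : 2 ≤ finrank ℝ E) {e : E} (he : ‖e‖ = 1)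
    {α β : ℝ} (hα : -1 < α) (hβ : 1 < β + finrank ℝ E) :
    ∫⁻ θ, zonalPower e α β θ ∂sphereUniform E ≠ 0 ∧
      ∫⁻ θ, zonalPower e α β θ ∂sphereUniform E ≠ ⊤ := by
  have : Nontrivial E := nontrivial_of_finrank_pos (R := ℝ) (by lia)
  have : Nontrivial (ℝ ∙ e)ᗮ := nontrivial_orthogonal hE he
  have hrank : (finrank ℝ (ℝ ∙ e)ᗮ : ℝ) + 1 = finrank ℝ E := by
    exact_mod_cast finrank_orthogonal_add_one he
  have hmass : (volume : Measure E).toSphere univ ≠ 0 :=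
    Measure.measure_univ_ne_zero.2 (Measure.toSphere_ne_zero _)
  have hmass' : (volume : Measure (ℝ ∙ e)ᗮ).toSphere univ ≠ 0 :=
    Measure.measure_univ_ne_zero.2 (Measure.toSphere_ne_zero _)
  have hGamma : 0 < Gamma ((α + β + finrank ℝ E) / 2) := Gamma_pos_of_pos (by linarith)
  have hGammaα : 0 < Gamma ((α + 1) / 2) := Gamma_pos_of_pos (by linarith)
  have hGammaβ : 0 < Gamma ((β + finrank ℝ (ℝ ∙ e)ᗮ) / 2) := Gamma_pos_of_pos (by linarith)
  have hbeta := (lintegral_abs_inner_rpow_mul_exp_eq_zonalPower e (by linarith)).symm.trans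
    (lintegral_abs_inner_rpow_mul_exp_eq_orthogonal he hα β)
  rw [lintegral_norm_sq_rpow_mul_exp (by linarith)] at hbeta
  rw [sphereUniform, lintegral_smul_measure, smul_eq_mul]
  constructor
  · refine mul_ne_zero (ENNReal.inv_ne_zero.2 (measure_ne_top _ _)) fun hzero => ?_
    rw [hzero, zero_mul] at hbeta
    exact absurd hbeta.symm (by positivity)
  · refine ENNReal.mul_ne_top (ENNReal.inv_ne_top.2 hmass) fun htop => ?_
    rw [htop, ENNReal.top_mul (by positivity)] at hbeta
    exact absurd hbeta.symm (by finiteness)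

end SphericalMoments

section Rotations

open Set Module
open scoped Pointwise

variable {E F : Type*} [NormedAddCommGroup E] [InnerProductSpace ℝ E] [NormedAddCommGroup F]
  [InnerProductSpace ℝ F]

/-- The map between unit spheres induced by a linear isometry. -/
def sphereMap (L : E →ₗᵢ[ℝ] F) (v : sphere (0 : E) 1) : sphere (0 : F) 1 :=
  ⟨L v, by simp⟩

theorem continuous_sphereMap (L : E →ₗᵢ[ℝ] F) : Continuous (sphereMap L) :=
  (L.continuous.comp continuous_subtype_val).subtype_mk _

variable [MeasurableSpace E] [BorelSpace E] [MeasurableSpace F] [BorelSpace F]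

@[fun_prop]
theorem measurable_sphereMap (L : E →ₗᵢ[ℝ] F) : Measurable (sphereMap L) :=
  (continuous_sphereMap L).measurable

variable [FiniteDimensional ℝ E] [FiniteDimensional ℝ F]

theorem measurePreserving_sphereMap_toSphere (g : E ≃ₗᵢ[ℝ] F) :
    MeasurePreserving (sphereMap g.toLinearIsometry) (volume : Measure E).toSphere
      (volume : Measure F).toSphere := by
  refine ⟨measurable_sphereMap _, Measure.ext fun s hs => ?_⟩
  have hcone : g ⁻¹' (Ioo (0 : ℝ) 1 • ((↑) '' s : Set F)) =
      Ioo (0 : ℝ) 1 • ((↑) '' (sphereMap g.toLinearIsometry ⁻¹' s) : Set E) := by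
    ext x
    constructor
    · rintro ⟨r, hr, _, ⟨v, hv, rfl⟩, hx : r • (v : F) = g x⟩
      refine ⟨r, hr, _, ⟨sphereMap g.symm.toLinearIsometry v, ?_, rfl⟩, ?_⟩
      · rwa [mem_preimage, show sphereMap g.toLinearIsometry
          (sphereMap g.symm.toLinearIsometry v) = v from Subtype.ext (g.apply_symm_apply v)]
      · simp [sphereMap, ← map_smul, hx]
    · rintro ⟨r, hr, _, ⟨v, hv, rfl⟩, rfl⟩
      exact ⟨r, hr, _, ⟨_, hv, rfl⟩, (map_smul g r (v : E)).symm⟩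
  rw [Measure.map_apply (measurable_sphereMap _) hs, Measure.toSphere_apply' _ hs,
    Measure.toSphere_apply' _ (measurable_sphereMap _ hs), ← hcone,
    g.measurePreserving.measure_preimage_emb g.toHomeomorph.measurableEmbedding,
    g.toLinearEquiv.finrank_eq]

theorem measurePreserving_sphereMap (g : E ≃ₗᵢ[ℝ] F) :
    MeasurePreserving (sphereMap g.toLinearIsometry) (sphereUniform E) (sphereUniform F) := by
  have hg := measurePreserving_sphereMap_toSphere g
  rw [sphereUniform, sphereUniform, ← hg.measure_preimage MeasurableSet.univ.nullMeasurableSet]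
  exact hg.smul_measure _

/-- The average of a function over the great subsphere cut out by a subspace. -/
def subsphereAverage (K : Submodule ℝ E) (φ : sphere (0 : E) 1 → ℝ≥0∞) : ℝ≥0∞ :=
  ∫⁻ v, φ (sphereMap K.subtypeₗᵢ v) ∂sphereUniform K

/-- The codimension-one Funk transform on the unit sphere of an arbitrary finite-dimensional real
inner product space. -/
def funkTransform (φ : sphere (0 : E) 1 → ℝ≥0∞) (w : sphere (0 : E) 1) : ℝ≥0∞ :=
  subsphereAverage (ℝ ∙ (w : E))ᗮ φ

theorem subsphereAverage_map (g : E ≃ₗᵢ[ℝ] E) (K : Submodule ℝ E) {φ : sphere (0 : E) 1 → ℝ≥0∞}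
    (hφ : Measurable φ) :
    subsphereAverage (K.map g.toLinearEquiv.toLinearMap) φ =
      subsphereAverage K (φ ∘ sphereMap g.toLinearIsometry) :=
  ((measurePreserving_sphereMap (g.submoduleMap K)).lintegral_comp
    (hφ.comp (measurable_sphereMap (K.map g.toLinearEquiv.toLinearMap).subtypeₗᵢ))).symm

theorem funkTransform_sphereMap (g : E ≃ₗᵢ[ℝ] E) {φ : sphere (0 : E) 1 → ℝ≥0∞}
    (hφ : Measurable φ) (w : sphere (0 : E) 1) :
    funkTransform φ (sphereMap g.toLinearIsometry w) =
      funkTransform (φ ∘ sphereMap g.toLinearIsometry) w := by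
  have hperp : (ℝ ∙ (sphereMap g.toLinearIsometry w : E))ᗮ =
      (ℝ ∙ (w : E))ᗮ.map g.toLinearEquiv.toLinearMap := by
    rw [Submodule.map_orthogonal_equiv, Submodule.map_span, image_singleton]
    rfl
  rw [funkTransform, hperp, subsphereAverage_map g _ hφ]
  rfl

end Rotations

section SelfAdjointness

open Set Module

variable {E : Type*} [NormedAddCommGroup E] [InnerProductSpace ℝ E]

/-- The reflection of `E` exchanging the unit vectors `e` and `w`, acting on the unit sphere. -/
def sphereReflection (e w : sphere (0 : E) 1) : sphere (0 : E) 1 → sphere (0 : E) 1 :=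
  sphereMap (ℝ ∙ ((e : E) - w))ᗮ.reflection.toLinearIsometry

theorem coe_sphereReflection (e w v : sphere (0 : E) 1) : (sphereReflection e w v : E) =
    v - (2 : ℝ) • (inner ℝ ((e : E) - w) (v : E) / ‖(e : E) - w‖ ^ 2) • ((e : E) - w) := by
  have hreflection := Submodule.reflection_singleton_apply (𝕜 := ℝ) ((e : E) - w) v
  simp only [sphereReflection, sphereMap, LinearIsometryEquiv.coe_toLinearIsometry,
    Submodule.reflection_orthogonal_apply, hreflection, neg_sub, ofNat_smul_eq_nsmul]
  rfl

theorem sphereReflection_left (e w : sphere (0 : E) 1) : sphereReflection e w e = w :=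
  Subtype.ext (Submodule.reflection_sub (by simp))

theorem sphereReflection_right (e w : sphere (0 : E) 1) : sphereReflection e w w = e := by
  nth_rw 2 [← sphereReflection_left e w]
  exact Subtype.ext (Submodule.reflection_reflection _ _)

variable [FiniteDimensional ℝ E]

instance compactSpace_unitary : CompactSpace (unitary (E →L[ℝ] E)) := by
  refine isCompact_iff_compactSpace.1 (isCompact_of_isClosed_isBounded isClosed_unitary ?_)
  refine isBounded_iff_forall_norm_le.2 ⟨1, fun g hg => ?_⟩
  exact ContinuousLinearMap.opNorm_le_bound _ zero_le_one fun x =>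
    (one_mul ‖x‖).symm ▸ (Unitary.norm_map ⟨g, hg⟩ x).le

/-- The action of the orthogonal group on the unit sphere. -/
def sphereRotation (g : unitary (E →L[ℝ] E)) : sphere (0 : E) 1 → sphere (0 : E) 1 :=
  sphereMap (Unitary.linearIsometryEquiv g).toLinearIsometry

theorem exists_sphereRotation_eq_sphereReflection (e w : sphere (0 : E) 1) :
    ∃ g : unitary (E →L[ℝ] E), sphereRotation g = sphereReflection e w :=
  ⟨Unitary.linearIsometryEquiv.symm (ℝ ∙ ((e : E) - w))ᗮ.reflection, by
    rw [sphereRotation, MulEquiv.apply_symm_apply, sphereReflection]⟩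

theorem continuous_sphereRotation_inv :
    Continuous fun q : unitary (E →L[ℝ] E) × sphere (0 : E) 1 => sphereRotation q.1⁻¹ q.2 := by
  refine Continuous.subtype_mk ?_ _
  exact (continuous_subtype_val.comp (continuous_inv.comp continuous_fst)).clm_apply
    (continuous_subtype_val.comp continuous_snd)

variable (E) in
/-- The Haar probability measure of the orthogonal group. -/
def rotationHaar : Measure (unitary (E →L[ℝ] E)) := Measure.haarMeasure ⊤

instance isProbabilityMeasure_rotationHaar : IsProbabilityMeasure (rotationHaar E) :=
  ⟨Measure.haarMeasure_self⟩

theorem lintegral_sphereRotation_inv_comp_sphereReflection (e w : sphere (0 : E) 1)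
    (f : (sphere (0 : E) 1 → sphere (0 : E) 1) → ℝ≥0∞) :
    ∫⁻ g, f (sphereRotation g⁻¹ ∘ sphereReflection e w) ∂rotationHaar E =
      ∫⁻ g, f (sphereRotation g⁻¹) ∂rotationHaar E := by
  obtain ⟨h, hh⟩ := exists_sphereRotation_eq_sphereReflection e w
  have hinv := lintegral_mul_left_eq_self (μ := Measure.haarMeasure ⊤)
    (fun g => f (sphereRotation g⁻¹)) h⁻¹
  simp only [mul_inv_rev, inv_inv] at hinv
  rw [← hh]
  exact hinv

theorem lintegral_sphereRotation_inv_mul_swap (φ ψ : sphere (0 : E) 1 → ℝ≥0∞)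
    (e v : sphere (0 : E) 1) :
    ∫⁻ g, φ (sphereRotation g⁻¹ v) * ψ (sphereRotation g⁻¹ e) ∂rotationHaar E =
      ∫⁻ g, φ (sphereRotation g⁻¹ e) * ψ (sphereRotation g⁻¹ v) ∂rotationHaar E := by
  rw [← lintegral_sphereRotation_inv_comp_sphereReflection e v fun R => φ (R v) * ψ (R e)]
  simp only [Function.comp_apply, sphereReflection_left, sphereReflection_right]

variable [MeasurableSpace E] [BorelSpace E]

@[fun_prop]
theorem measurable_sphereReflection {X : Type*} [MeasurableSpace X] (e : sphere (0 : E) 1)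
    {f g : X → sphere (0 : E) 1} (hf : Measurable f) (hg : Measurable g) :
    Measurable fun x => sphereReflection e (f x) (g x) := by
  refine Measurable.subtype_mk (f := fun x => (sphereReflection e (f x) (g x) : E)) ?_
  simp only [coe_sphereReflection]
  fun_prop

@[fun_prop]
theorem measurable_sphereRotation_inv {X : Type*} [MeasurableSpace X]
    {f : X → unitary (E →L[ℝ] E)} {g : X → sphere (0 : E) 1} (hf : Measurable f)
    (hg : Measurable g) : Measurable fun x => sphereRotation (f x)⁻¹ (g x) := by
  have hcomp := continuous_sphereRotation_inv.measurable.comp (hf.prodMk hg)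
  exact hcomp

theorem measurable_funkTransform {φ : sphere (0 : E) 1 → ℝ≥0∞} (hφ : Measurable φ) :
    Measurable (funkTransform φ) := by
  rcases isEmpty_or_nonempty (sphere (0 : E) 1) with hempty | ⟨⟨e⟩⟩
  · exact measurable_of_empty _
  have hrotate (w : sphere (0 : E) 1) : funkTransform φ w =
      ∫⁻ v, φ (sphereReflection e w (sphereMap (ℝ ∙ (e : E))ᗮ.subtypeₗᵢ v))
        ∂sphereUniform (ℝ ∙ (e : E))ᗮ := by
    nth_rw 1 [← sphereReflection_left e w]
    exact funkTransform_sphereMap _ hφ e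
  have hjoint : Measurable fun q : sphere (0 : E) 1 × sphere (0 : (ℝ ∙ (e : E))ᗮ) 1 =>
      φ (sphereReflection e q.1 (sphereMap (ℝ ∙ (e : E))ᗮ.subtypeₗᵢ q.2)) := by fun_prop
  simp only [funext hrotate]
  exact hjoint.lintegral_prod_right'

theorem lintegral_comp_sphereRotation_inv [Nontrivial E] {f : sphere (0 : E) 1 → ℝ≥0∞}
    (hf : Measurable f) (e : sphere (0 : E) 1) :
    ∫⁻ g, f (sphereRotation g⁻¹ e) ∂rotationHaar E = ∫⁻ v, f v ∂sphereUniform E := by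
  have hbase (v : sphere (0 : E) 1) : ∫⁻ g, f (sphereRotation g⁻¹ v) ∂rotationHaar E =
      ∫⁻ g, f (sphereRotation g⁻¹ e) ∂rotationHaar E := by
    rw [← lintegral_sphereRotation_inv_comp_sphereReflection e v fun R => f (R e)]
    simp only [Function.comp_apply, sphereReflection_left]
  have hjoint : Measurable (Function.uncurry fun (g : unitary (E →L[ℝ] E)) v =>
      f (sphereRotation g⁻¹ v)) := by fun_prop
  have hrotation (g : unitary (E →L[ℝ] E)) :
      ∫⁻ v, f (sphereRotation g v) ∂sphereUniform E = ∫⁻ v, f v ∂sphereUniform E :=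
    (measurePreserving_sphereMap _).lintegral_comp hf
  calc ∫⁻ g, f (sphereRotation g⁻¹ e) ∂rotationHaar E
      = ∫⁻ v, ∫⁻ g, f (sphereRotation g⁻¹ v) ∂rotationHaar E ∂sphereUniform E := by
        simp only [hbase, lintegral_const, measure_univ, mul_one]
    _ = ∫⁻ g, ∫⁻ v, f (sphereRotation g⁻¹ v) ∂sphereUniform E ∂rotationHaar E :=
        (lintegral_lintegral_swap hjoint.aemeasurable).symm
    _ = ∫⁻ v, f v ∂sphereUniform E := by
        simp only [hrotation, lintegral_const, measure_univ, mul_one]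

theorem lintegral_funkTransform_mul_eq [Nontrivial E] {φ ψ : sphere (0 : E) 1 → ℝ≥0∞}
    (hφ : Measurable φ) (hψ : Measurable ψ) (e : sphere (0 : E) 1) :
    ∫⁻ w, funkTransform φ w * ψ w ∂sphereUniform E =
      ∫⁻ v, ∫⁻ g, φ (sphereRotation g⁻¹ (sphereMap (ℝ ∙ (e : E))ᗮ.subtypeₗᵢ v)) *
        ψ (sphereRotation g⁻¹ e) ∂rotationHaar E ∂sphereUniform (ℝ ∙ (e : E))ᗮ := by
  have hF := measurable_funkTransform hφ
  have hintegrand : Measurable (Function.uncurry fun (g : unitary (E →L[ℝ] E))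
      (v : sphere (0 : (ℝ ∙ (e : E))ᗮ) 1) =>
        φ (sphereRotation g⁻¹ (sphereMap (ℝ ∙ (e : E))ᗮ.subtypeₗᵢ v)) *
          ψ (sphereRotation g⁻¹ e)) := by fun_prop
  rw [← lintegral_comp_sphereRotation_inv (f := fun w => funkTransform φ w * ψ w)
      (by fun_prop) e,
    ← lintegral_lintegral_swap hintegrand.aemeasurable]
  refine lintegral_congr fun g => ?_
  rw [lintegral_mul_const _ (by fun_prop), sphereRotation, funkTransform_sphereMap _ hφ]
  rfl

theorem lintegral_funkTransform_mul [Nontrivial E] {φ ψ : sphere (0 : E) 1 → ℝ≥0∞}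
    (hφ : Measurable φ) (hψ : Measurable ψ) :
    ∫⁻ w, funkTransform φ w * ψ w ∂sphereUniform E =
      ∫⁻ w, φ w * funkTransform ψ w ∂sphereUniform E := by
  obtain ⟨e, he⟩ := exists_norm_eq E zero_le_one
  have hcomm : ∫⁻ w, φ w * funkTransform ψ w ∂sphereUniform E =
      ∫⁻ w, funkTransform ψ w * φ w ∂sphereUniform E := by simp only [mul_comm]
  rw [hcomm, lintegral_funkTransform_mul_eq hφ hψ ⟨e, by simpa using he⟩,
    lintegral_funkTransform_mul_eq hψ hφ ⟨e, by simpa using he⟩]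
  refine lintegral_congr fun v => ?_
  rw [lintegral_sphereRotation_inv_mul_swap]
  simp only [mul_comm]

end SelfAdjointness

section ZonalPowers

open Set Module

variable {E : Type*} [NormedAddCommGroup E] [InnerProductSpace ℝ E]

/-- A point of the sphere is oblique to `u` if its height `t = ⟨θ, u⟩` along `u` is nonzero and
`t² < 1`; at these points no power of the factors of `zonalPower u` vanishes or is infinite. -/
def IsOblique (u : E) (θ : sphere (0 : E) 1) : Prop :=
  inner ℝ (θ : E) u ≠ 0 ∧ inner ℝ (θ : E) u ^ 2 < 1

namespace IsOblique

variable {u : E} {θ : sphere (0 : E) 1}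

theorem zonalPower_ne_zero (h : IsOblique u θ) (α β : ℝ) : zonalPower u α β θ ≠ 0 := by
  have hheight : 0 < |inner ℝ (θ : E) u| := abs_pos.2 h.1
  have hwidth : 0 < 1 - inner ℝ (θ : E) u ^ 2 := sub_pos.2 h.2
  rw [zonalPower, ENNReal.ofReal_rpow_of_pos hheight, ENNReal.ofReal_rpow_of_pos hwidth]
  positivity

theorem zonalPower_ne_top (h : IsOblique u θ) (α β : ℝ) : zonalPower u α β θ ≠ ⊤ := by
  have hheight : 0 < |inner ℝ (θ : E) u| := abs_pos.2 h.1
  have hwidth : 0 < 1 - inner ℝ (θ : E) u ^ 2 := sub_pos.2 h.2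
  rw [zonalPower, ENNReal.ofReal_rpow_of_pos hheight, ENNReal.ofReal_rpow_of_pos hwidth]
  finiteness

theorem zonalPower_mul (h : IsOblique u θ) (α β γ δ : ℝ) :
    zonalPower u α β θ * zonalPower u γ δ θ = zonalPower u (α + γ) (β + δ) θ := by
  have hheight : ENNReal.ofReal |inner ℝ (θ : E) u| ≠ 0 := by simpa using h.1
  have hwidth : ENNReal.ofReal (1 - inner ℝ (θ : E) u ^ 2) ≠ 0 := by simpa using h.2
  simp only [zonalPower, add_div, ENNReal.rpow_add _ _ hheight ENNReal.ofReal_ne_top,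
    ENNReal.rpow_add _ _ hwidth ENNReal.ofReal_ne_top]
  ring

theorem zonalPower_rpow (h : IsOblique u θ) (α β q : ℝ) :
    zonalPower u α β θ ^ q = zonalPower u (α * q) (β * q) θ := by
  have hheight : 0 < |inner ℝ (θ : E) u| := abs_pos.2 h.1
  have hwidth : 0 < 1 - inner ℝ (θ : E) u ^ 2 := sub_pos.2 h.2
  simp only [zonalPower, ENNReal.ofReal_rpow_of_pos hheight, ENNReal.ofReal_rpow_of_pos hwidth]
  rw [ENNReal.mul_rpow_of_ne_top ENNReal.ofReal_ne_top ENNReal.ofReal_ne_top,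
    ENNReal.ofReal_rpow_of_pos (by positivity), ENNReal.ofReal_rpow_of_pos (by positivity),
    ← rpow_mul hheight.le, ← rpow_mul hwidth.le, mul_div_right_comm]

end IsOblique

theorem zonalPower_subtype (K : Submodule ℝ E) [K.HasOrthogonalProjection] (e : E) (α β : ℝ)
    (v : sphere (0 : K) 1) :
    zonalPower e α β (sphereMap K.subtypeₗᵢ v) =
      zonalPower (K.orthogonalProjectionOnto e) α β v := by
  simp only [zonalPower, Submodule.inner_orthogonalProjectionOnto_eq_of_mem_left]
  rfl

theorem isOblique_subtype_iff (K : Submodule ℝ E) [K.HasOrthogonalProjection] {e : E}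
    {v : sphere (0 : K) 1} :
    IsOblique e (sphereMap K.subtypeₗᵢ v) ↔ IsOblique (K.orthogonalProjectionOnto e) v := by
  simp only [IsOblique, Submodule.inner_orthogonalProjectionOnto_eq_of_mem_left]
  rfl

theorem norm_orthogonalProjectionOnto_orthogonal_sq {e : E} (he : ‖e‖ = 1)
    (w : sphere (0 : E) 1) :
    ‖(ℝ ∙ (w : E))ᗮ.orthogonalProjectionOnto e‖ ^ 2 = 1 - inner ℝ (w : E) e ^ 2 := by
  have hpythagoras := Submodule.norm_sq_eq_add_norm_sq_projection e (ℝ ∙ (w : E))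
  have hparallel : ‖(ℝ ∙ (w : E)).orthogonalProjectionOnto e‖ = |inner ℝ (w : E) e| := by
    rw [Submodule.coe_norm, Submodule.coe_orthogonalProjectionOnto_apply,
      Submodule.starProjection_unit_singleton ℝ (norm_eq_of_mem_sphere w), norm_smul,
      norm_eq_of_mem_sphere w, mul_one, norm_eq_abs]
  rw [he, hparallel, sq_abs] at hpythagoras
  linarith

variable [FiniteDimensional ℝ E] [MeasurableSpace E] [BorelSpace E]

theorem ae_isOblique_of_lintegral_zonalPower_ne_top {ρ : Measure (sphere (0 : E) 1)} {u : E}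
    {α β : ℝ} (hα : α < 0) (hβ : β < 0) (h : ∫⁻ θ, zonalPower u α β θ ∂ρ ≠ ⊤) :
    ∀ᵐ θ ∂ρ, IsOblique u θ := by
  filter_upwards [ae_lt_top (measurable_zonalPower u α β) h] with θ hθ
  have hfactor {x y : ℝ≥0∞} {q r : ℝ} (hq : q < 0) (hr : r < 0) (hy : y ≠ ⊤)
      (hlt : x ^ q * y ^ r < ⊤) : x ≠ 0 := by
    rintro rfl
    rw [ENNReal.zero_rpow_of_neg hq, ENNReal.top_mul] at hlt
    · exact hlt.false
    · simp [ENNReal.rpow_eq_zero_iff, hy, hr.le]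
  have hβ_half : β / 2 < 0 := by linarith
  constructor
  · simpa using hfactor hα hβ_half ENNReal.ofReal_ne_top hθ
  · simpa using hfactor hβ_half hα ENNReal.ofReal_ne_top (mul_comm _ _ |>.trans_lt hθ)

theorem ae_isOblique (hE : 2 ≤ finrank ℝ E) {e : E} (he : ‖e‖ = 1) :
    ∀ᵐ θ ∂sphereUniform E, IsOblique e θ := by
  have hrank : (2 : ℝ) ≤ finrank ℝ E := by exact_mod_cast hE
  exact ae_isOblique_of_lintegral_zonalPower_ne_top (α := -1 / 2) (β := -1 / 2) (by norm_num)
    (by norm_num)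
    (lintegral_zonalPower_ne_zero_and_ne_top hE he (by norm_num) (by linarith)).2

theorem funkTransform_zonalPower {m : ℕ} (hE : finrank ℝ E = m + 1) (hm : 1 ≤ m) {e : E}
    (he : ‖e‖ = 1) {w : sphere (0 : E) 1} (hw : IsOblique e w) {a : ℝ} (ha : -1 < a) :
    funkTransform (zonalPower e a (-(a + m))) w =
      ENNReal.ofReal (funkConst m a) * zonalPower e (-(a + 1)) a w := by
  have hwnorm := norm_eq_of_mem_sphere w
  have : Nontrivial (ℝ ∙ (w : E))ᗮ := nontrivial_orthogonal (by lia) hwnorm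
  have hrank : finrank ℝ (ℝ ∙ (w : E))ᗮ = m := by
    have := finrank_orthogonal_add_one hwnorm
    lia
  set u := (ℝ ∙ (w : E))ᗮ.orthogonalProjectionOnto e
  have hu : ‖u‖ ^ 2 = 1 - inner ℝ (w : E) e ^ 2 := norm_orthogonalProjectionOnto_orthogonal_sq he w
  have hu_lt : ‖u‖ < 1 := by
    have := sq_pos_of_ne_zero hw.1
    exact (sq_lt_one_iff₀ (norm_nonneg u)).1 (by linarith)
  have hmoment := lintegral_zonalPower_of_norm_lt_one hu_lt ha
  rw [hrank] at hmoment
  simp only [funkTransform, subsphereAverage, zonalPower_subtype]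
  rw [hmoment, hu, sub_sub_cancel, zonalPower]
  have hnorm : ENNReal.ofReal ‖u‖ ^ a = ENNReal.ofReal (1 - inner ℝ (w : E) e ^ 2) ^ (a / 2) := by
    rw [← hu, ENNReal.ofReal_pow (norm_nonneg u), ← ENNReal.rpow_natCast, ← ENNReal.rpow_mul]
    norm_num [mul_div_cancel₀]
  have hheight : ENNReal.ofReal (inner ℝ (w : E) e ^ 2) ^ (-(a + 1) / 2) =
      ENNReal.ofReal |inner ℝ (w : E) e| ^ (-(a + 1)) := by
    rw [← sq_abs, ENNReal.ofReal_pow (abs_nonneg _), ← ENNReal.rpow_natCast, ← ENNReal.rpow_mul]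
    norm_num [mul_div_cancel₀]
  rw [hnorm, hheight, mul_comm (_ ^ (a / 2))]

end ZonalPowers

section SchurTest

open Set Module

theorem lintegral_rpow_le_lintegral_rpow_mul {X : Type*} [MeasurableSpace X] {ρ : Measure X}
    {f v : X → ℝ≥0∞} (hf : AEMeasurable f ρ) (hv : AEMeasurable v ρ)
    (hv_pos : ∀ᵐ x ∂ρ, v x ≠ 0 ∧ v x ≠ ⊤) {p : ℝ} (hp : 1 ≤ p) :
    (∫⁻ x, f x ∂ρ) ^ p ≤ (∫⁻ x, f x ^ p * v x ^ (1 - p) ∂ρ) * (∫⁻ x, v x ∂ρ) ^ (p - 1) := by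
  have hp_pos : 0 < p := by linarith
  have hsplit : ∫⁻ x, f x ∂ρ = ∫⁻ x, (f x ^ p * v x ^ (1 - p)) ^ p⁻¹ * v x ^ (1 - p⁻¹) ∂ρ := by
    refine lintegral_congr_ae ?_
    filter_upwards [hv_pos] with x hx
    rw [ENNReal.mul_rpow_of_nonneg _ _ (by positivity), ENNReal.rpow_rpow_inv hp_pos.ne',
      ← ENNReal.rpow_mul, mul_assoc, ← ENNReal.rpow_add _ _ hx.1 hx.2,
      show (1 - p) * p⁻¹ + (1 - p⁻¹) = 0 by field_simp; ring, ENNReal.rpow_zero, mul_one]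
  have hholder := ENNReal.lintegral_mul_norm_pow_le
    ((hf.pow_const p).mul (hv.pow_const (1 - p))) hv (inv_nonneg.2 hp_pos.le)
    (sub_nonneg.2 (inv_le_one_of_one_le₀ hp)) (add_sub_cancel _ _)
  calc (∫⁻ x, f x ∂ρ) ^ p
    _ ≤ ((∫⁻ x, f x ^ p * v x ^ (1 - p) ∂ρ) ^ p⁻¹ * (∫⁻ x, v x ∂ρ) ^ (1 - p⁻¹)) ^ p := by
      rw [hsplit]
      exact ENNReal.rpow_le_rpow hholder hp_pos.le
    _ = (∫⁻ x, f x ^ p * v x ^ (1 - p) ∂ρ) * (∫⁻ x, v x ∂ρ) ^ (p - 1) := by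
      rw [ENNReal.mul_rpow_of_nonneg _ _ hp_pos.le, ENNReal.rpow_inv_rpow hp_pos.ne',
        ← ENNReal.rpow_mul, sub_mul, one_mul, inv_mul_cancel₀ hp_pos.ne']

variable {E : Type*} [NormedAddCommGroup E] [InnerProductSpace ℝ E] [FiniteDimensional ℝ E]
  [MeasurableSpace E] [BorelSpace E]

theorem funkTransform_rpow_mul_le {u v φ : sphere (0 : E) 1 → ℝ≥0∞} (hv : Measurable v)
    (hφ : Measurable φ) {p : ℝ} (hp : 1 ≤ p) {C : ℝ≥0∞} {w : sphere (0 : E) 1}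
    (hv_pos : ∀ᵐ θ ∂sphereUniform (ℝ ∙ (w : E))ᗮ,
      v (sphereMap (ℝ ∙ (w : E))ᗮ.subtypeₗᵢ θ) ≠ 0 ∧ v (sphereMap (ℝ ∙ (w : E))ᗮ.subtypeₗᵢ θ) ≠ ⊤)
    (hu_pos : u w ≠ 0 ∧ u w ≠ ⊤) (hvu : funkTransform v w ≤ C * u w) :
    funkTransform φ w ^ p * u w ^ (1 - p) ≤
      C ^ (p - 1) * funkTransform (fun θ => φ θ ^ p * v θ ^ (1 - p)) w := by
  have hincl := measurable_sphereMap (ℝ ∙ (w : E))ᗮ.subtypeₗᵢ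
  have hholder : funkTransform φ w ^ p ≤ funkTransform (fun θ => φ θ ^ p * v θ ^ (1 - p)) w *
      funkTransform v w ^ (p - 1) :=
    lintegral_rpow_le_lintegral_rpow_mul (hφ.comp hincl).aemeasurable (hv.comp hincl).aemeasurable
      hv_pos hp
  have hp_sub : 0 ≤ p - 1 := by linarith
  calc funkTransform φ w ^ p * u w ^ (1 - p)
    _ ≤ funkTransform (fun θ => φ θ ^ p * v θ ^ (1 - p)) w * (C * u w) ^ (p - 1) *
        u w ^ (1 - p) := by
      grw [hholder, hvu]
    _ = C ^ (p - 1) * funkTransform (fun θ => φ θ ^ p * v θ ^ (1 - p)) w *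
        (u w ^ (p - 1) * u w ^ (1 - p)) := by
      rw [ENNReal.mul_rpow_of_nonneg _ _ hp_sub]
      ring
    _ = C ^ (p - 1) * funkTransform (fun θ => φ θ ^ p * v θ ^ (1 - p)) w := by
      rw [← ENNReal.rpow_add _ _ hu_pos.1 hu_pos.2, sub_add_sub_cancel, sub_self,
        ENNReal.rpow_zero, mul_one]

theorem lintegral_funkTransform_rpow_mul_le [Nontrivial E] {u v φ : sphere (0 : E) 1 → ℝ≥0∞}
    (hu : Measurable u) (hv : Measurable v) (hφ : Measurable φ) {p : ℝ} (hp : 1 ≤ p) {C : ℝ≥0∞}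
    (hv_pos : ∀ᵐ w : sphere (0 : E) 1 ∂sphereUniform E, ∀ᵐ θ ∂sphereUniform (ℝ ∙ (w : E))ᗮ,
      v (sphereMap (ℝ ∙ (w : E))ᗮ.subtypeₗᵢ θ) ≠ 0 ∧ v (sphereMap (ℝ ∙ (w : E))ᗮ.subtypeₗᵢ θ) ≠ ⊤)
    (hu_pos : ∀ᵐ w ∂sphereUniform E, u w ≠ 0 ∧ u w ≠ ⊤)
    (hvu : ∀ᵐ w ∂sphereUniform E, funkTransform v w ≤ C * u w) :
    ∫⁻ w, funkTransform φ w ^ p * (u w ^ (1 - p) * v w) ∂sphereUniform E ≤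
      C ^ p * ∫⁻ θ, φ θ ^ p * (v θ ^ (1 - p) * u θ) ∂sphereUniform E := by
  set g : sphere (0 : E) 1 → ℝ≥0∞ := fun θ => φ θ ^ p * v θ ^ (1 - p)
  have hg : Measurable g := by fun_prop
  have hFg := measurable_funkTransform hg
  calc ∫⁻ w, funkTransform φ w ^ p * (u w ^ (1 - p) * v w) ∂sphereUniform E
    _ ≤ ∫⁻ w, C ^ (p - 1) * (funkTransform g w * v w) ∂sphereUniform E := by
      refine lintegral_mono_ae ?_
      filter_upwards [hv_pos, hu_pos, hvu] with w hvw huw hvuw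
      grw [← mul_assoc, funkTransform_rpow_mul_le hv hφ hp hvw huw hvuw, mul_assoc]
    _ = C ^ (p - 1) * ∫⁻ θ, g θ * funkTransform v θ ∂sphereUniform E := by
      rw [lintegral_const_mul _ (by fun_prop), lintegral_funkTransform_mul hg hv]
    _ ≤ C ^ (p - 1) * ∫⁻ θ, C * (φ θ ^ p * (v θ ^ (1 - p) * u θ)) ∂sphereUniform E := by
      refine mul_le_mul_right ?_ _
      refine lintegral_mono_ae ?_
      filter_upwards [hvu] with θ hθ
      grw [hθ]
      exact le_of_eq (by ring)
    _ = C ^ p * ∫⁻ θ, φ θ ^ p * (v θ ^ (1 - p) * u θ) ∂sphereUniform E := by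
      rw [lintegral_const_mul _ (by fun_prop), ← mul_assoc]
      nth_rw 2 [← ENNReal.rpow_one C]
      rw [← ENNReal.rpow_add_of_nonneg _ _ (by linarith) zero_le_one, sub_add_cancel]

end SchurTest

section SharpInequality

open Set Module

variable {E : Type*} [NormedAddCommGroup E] [InnerProductSpace ℝ E] [FiniteDimensional ℝ E]
  [MeasurableSpace E] [BorelSpace E] {m : ℕ} {e : E} {a p : ℝ}

theorem ae_isOblique_sphereMap (hE : finrank ℝ E = m + 1) (hm : 1 ≤ m) (he : ‖e‖ = 1)
    {w : sphere (0 : E) 1} (hw : IsOblique e w) :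
    ∀ᵐ θ ∂sphereUniform (ℝ ∙ (w : E))ᗮ, IsOblique e (sphereMap (ℝ ∙ (w : E))ᗮ.subtypeₗᵢ θ) := by
  have hrank : (1 : ℝ) ≤ m := by exact_mod_cast hm
  have hfinite : funkTransform (zonalPower e (-1 / 2) (-(-1 / 2 + m))) w ≠ ⊤ := by
    rw [funkTransform_zonalPower hE hm he hw (by norm_num)]
    exact ENNReal.mul_ne_top ENNReal.ofReal_ne_top (hw.zonalPower_ne_top _ _)
  simp only [funkTransform, subsphereAverage, zonalPower_subtype] at hfinite
  filter_upwards [ae_isOblique_of_lintegral_zonalPower_ne_top (by norm_num) (by linarith) hfinite]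
    with θ hθ
  exact (isOblique_subtype_iff _).2 hθ

theorem lintegral_funkTransform_rpow_mul_zonalPower_le (hE : finrank ℝ E = m + 1) (hm : 1 ≤ m)
    (he : ‖e‖ = 1) (ha : -1 < a) (hp : 1 ≤ p) {φ : sphere (0 : E) 1 → ℝ≥0∞} (hφ : Measurable φ) :
    ∫⁻ w, funkTransform φ w ^ p * zonalPower e (a * p + p - 1) (-(a * p) - m) w
        ∂sphereUniform E ≤
      ENNReal.ofReal (funkConst m a) ^ p *
        ∫⁻ θ, φ θ ^ p * zonalPower e (-(a * p) - 1) (a * p + m * (p - 1)) θ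
          ∂sphereUniform E := by
  have : Nontrivial E := nontrivial_of_finrank_pos (R := ℝ) (by lia)
  have hoblique := ae_isOblique (by lia) he
  set v := zonalPower e a (-(a + m))
  set u := zonalPower e (-(a + 1)) a
  have hschur := lintegral_funkTransform_rpow_mul_le (u := u) (v := v) (by fun_prop) (by fun_prop)
    hφ hp
    (by
      filter_upwards [hoblique] with w hw
      filter_upwards [ae_isOblique_sphereMap hE hm he hw] with θ hθ
      exact ⟨hθ.zonalPower_ne_zero _ _, hθ.zonalPower_ne_top _ _⟩)
    (by
      filter_upwards [hoblique] with w hw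
      exact ⟨hw.zonalPower_ne_zero _ _, hw.zonalPower_ne_top _ _⟩)
    (by
      filter_upwards [hoblique] with w hw
      exact (funkTransform_zonalPower hE hm he hw ha).le)
  convert hschur using 1
  · refine lintegral_congr_ae ?_
    filter_upwards [hoblique] with w hw
    rw [hw.zonalPower_rpow, hw.zonalPower_mul]
    ring_nf
  · congr 1
    refine lintegral_congr_ae ?_
    filter_upwards [hoblique] with w hw
    rw [hw.zonalPower_rpow, hw.zonalPower_mul]
    ring_nf

end SharpInequality

section Sharpness

open Set Module

variable {E : Type*} [NormedAddCommGroup E] [InnerProductSpace ℝ E]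

theorem inner_sq_le_one_sub_inner_sphereMap_sq {e : E} (he : ‖e‖ = 1) (w : sphere (0 : E) 1)
    (θ : sphere (0 : (ℝ ∙ (w : E))ᗮ) 1) :
    inner ℝ (w : E) e ^ 2 ≤
      1 - inner ℝ (sphereMap (ℝ ∙ (w : E))ᗮ.subtypeₗᵢ θ : E) e ^ 2 := by
  have hproj : inner ℝ (sphereMap (ℝ ∙ (w : E))ᗮ.subtypeₗᵢ θ : E) e =
      inner ℝ (θ : (ℝ ∙ (w : E))ᗮ) ((ℝ ∙ (w : E))ᗮ.orthogonalProjectionOnto e) :=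
    (Submodule.inner_orthogonalProjectionOnto_eq_of_mem_left _ _).symm
  have hcauchy := abs_real_inner_le_norm (θ : (ℝ ∙ (w : E))ᗮ)
    ((ℝ ∙ (w : E))ᗮ.orthogonalProjectionOnto e)
  rw [norm_eq_of_mem_sphere, one_mul, ← sq_le_sq₀ (abs_nonneg _) (norm_nonneg _), sq_abs,
    norm_orthogonalProjectionOnto_orthogonal_sq he, ← hproj] at hcauchy
  linarith

variable [FiniteDimensional ℝ E] [MeasurableSpace E] [BorelSpace E] {m : ℕ} {e : E} {a p ε : ℝ}

theorem ofReal_abs_inner_rpow_mul_funkTransform_le (he : ‖e‖ = 1) {w : sphere (0 : E) 1}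
    (hw : inner ℝ (w : E) e ≠ 0) (hε : 0 ≤ ε) (α β : ℝ) :
    ENNReal.ofReal |inner ℝ (w : E) e| ^ (2 * ε) * funkTransform (zonalPower e α β) w ≤
      funkTransform (zonalPower e α (β + 2 * ε)) w := by
  simp only [funkTransform, subsphereAverage]
  rw [← lintegral_const_mul _ (by fun_prop)]
  refine lintegral_mono fun θ => ?_
  set t : E := (sphereMap (ℝ ∙ (w : E))ᗮ.subtypeₗᵢ θ : E) with ht
  have hbessel : inner ℝ (w : E) e ^ 2 ≤ 1 - inner ℝ t e ^ 2 :=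
    inner_sq_le_one_sub_inner_sphereMap_sq he w θ
  have hwidth : ENNReal.ofReal (1 - inner ℝ t e ^ 2) ≠ 0 := by
    simpa using (sq_pos_of_ne_zero hw).trans_le hbessel
  have hsq : ENNReal.ofReal |inner ℝ (w : E) e| ^ (2 * ε) =
      ENNReal.ofReal (inner ℝ (w : E) e ^ 2) ^ ε := by
    rw [← sq_abs, ENNReal.ofReal_pow (abs_nonneg _), ← ENNReal.rpow_natCast, ← ENNReal.rpow_mul]
    norm_num
  calc ENNReal.ofReal |inner ℝ (w : E) e| ^ (2 * ε) * zonalPower e α β _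
    _ ≤ ENNReal.ofReal (1 - inner ℝ t e ^ 2) ^ ε * zonalPower e α β _ := by
      rw [hsq]
      gcongr
    _ = zonalPower e α (β + 2 * ε) _ := by
      simp only [zonalPower, ← ht]
      rw [add_div, mul_div_cancel_left₀ ε two_ne_zero,
        ENNReal.rpow_add _ _ hwidth ENNReal.ofReal_ne_top]
      ring

theorem funkConst_mul_zonalPower_le_funkTransform (hE : finrank ℝ E = m + 1) (hm : 1 ≤ m)
    (he : ‖e‖ = 1) {w : sphere (0 : E) 1} (hw : IsOblique e w) (ha : -1 < a) (hε : 0 ≤ ε) :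
    ENNReal.ofReal (funkConst m a) * zonalPower e (2 * ε - (a + 1)) a w ≤
      funkTransform (zonalPower e a (2 * ε - (a + m))) w := by
  have hheight : ENNReal.ofReal |inner ℝ (w : E) e| ≠ 0 := by simpa using hw.1
  calc ENNReal.ofReal (funkConst m a) * zonalPower e (2 * ε - (a + 1)) a w
    _ = ENNReal.ofReal |inner ℝ (w : E) e| ^ (2 * ε) *
        funkTransform (zonalPower e a (-(a + m))) w := by
      rw [funkTransform_zonalPower hE hm he hw ha, zonalPower, zonalPower, sub_eq_add_neg,
        ENNReal.rpow_add _ _ hheight ENNReal.ofReal_ne_top]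
      ring
    _ ≤ funkTransform (zonalPower e a (2 * ε - (a + m))) w := by
      rw [sub_eq_neg_add]
      exact ofReal_abs_inner_rpow_mul_funkTransform_le he hw.1 hε _ _

theorem ofReal_funkConst_add_le_of_lintegral_le (hE : finrank ℝ E = m + 1) (hm : 1 ≤ m)
    (he : ‖e‖ = 1) (ha : -1 < a) (hp : 0 < p) {K : ℝ≥0∞}
    (hK : ∀ φ : sphere (0 : E) 1 → ℝ≥0∞, Measurable φ →
      ∫⁻ w, funkTransform φ w ^ p * zonalPower e (a * p + p - 1) (-(a * p) - m) w
          ∂sphereUniform E ≤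
        K ^ p * ∫⁻ θ, φ θ ^ p * zonalPower e (-(a * p) - 1) (a * p + m * (p - 1)) θ
          ∂sphereUniform E) (hε : 0 < ε) :
    ENNReal.ofReal (funkConst m (a + ε)) ≤ K := by
  have hoblique := ae_isOblique (by lia) he
  have hεp : 0 < ε * p := by positivity
  have hrank : (finrank ℝ E : ℝ) = m + 1 := by exact_mod_cast hE
  have hI := lintegral_zonalPower_ne_zero_and_ne_top (α := ε * p - 1) (β := ε * p - m)
    (by lia) he (by linarith) (by linarith)
  set I := ∫⁻ w, zonalPower e (ε * p - 1) (ε * p - m) w ∂sphereUniform E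
  set C := ENNReal.ofReal (funkConst m (a + ε))
  set ψ := zonalPower e (a + ε) (2 * ε - (a + ε + m))
  have hlower : C ^ p * I ≤ ∫⁻ w, funkTransform ψ w ^ p *
      zonalPower e (a * p + p - 1) (-(a * p) - m) w ∂sphereUniform E := by
    rw [← lintegral_const_mul _ (measurable_zonalPower _ _ _)]
    refine lintegral_mono_ae ?_
    filter_upwards [hoblique] with w hw
    grw [← funkConst_mul_zonalPower_le_funkTransform hE hm he hw (by linarith) hε.le]
    rw [ENNReal.mul_rpow_of_nonneg _ _ hp.le, mul_assoc, hw.zonalPower_rpow, hw.zonalPower_mul]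
    refine le_of_eq ?_
    congr 2 <;> ring
  have hupper : ∫⁻ θ, ψ θ ^ p * zonalPower e (-(a * p) - 1) (a * p + m * (p - 1)) θ
      ∂sphereUniform E = I := by
    refine lintegral_congr_ae ?_
    filter_upwards [hoblique] with θ hθ
    rw [hθ.zonalPower_rpow, hθ.zonalPower_mul]
    ring_nf
  have hCK := hlower.trans (hK ψ (measurable_zonalPower _ _ _))
  rw [hupper, ENNReal.mul_le_mul_iff_left hI.1 hI.2] at hCK
  exact (ENNReal.rpow_le_rpow_iff hp).1 hCK

theorem funkConst_le_of_lintegral_le (hE : finrank ℝ E = m + 1) (hm : 1 ≤ m)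
    (he : ‖e‖ = 1) (ha : -1 < a) (hp : 0 < p) {c : ℝ} (hc : 0 ≤ c)
    (h : ∀ φ : sphere (0 : E) 1 → ℝ≥0∞, Measurable φ →
      ∫⁻ w, funkTransform φ w ^ p * zonalPower e (a * p + p - 1) (-(a * p) - m) w
          ∂sphereUniform E ≤
        ENNReal.ofReal c ^ p *
          ∫⁻ θ, φ θ ^ p * zonalPower e (-(a * p) - 1) (a * p + m * (p - 1)) θ
            ∂sphereUniform E) :
    funkConst m a ≤ c := by
  have hrank : (1 : ℝ) ≤ m := by exact_mod_cast hm
  have hshift : Filter.Tendsto (fun ε => a + ε) (nhdsWithin 0 (Ioi 0)) (nhds a) :=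
    (Continuous.tendsto' (by fun_prop) 0 a (add_zero a)).mono_left nhdsWithin_le_nhds
  have hlimit := (continuousAt_funkConst hrank ha).tendsto.comp hshift
  refine le_of_tendsto hlimit ?_
  filter_upwards [self_mem_nhdsWithin] with ε hε
  exact (ENNReal.ofReal_le_ofReal_iff hc).1
    (ofReal_funkConst_add_le_of_lintegral_le hE hm he ha hp h hε)

end Sharpness

section SharpConstant

open Module

variable {E : Type*} [NormedAddCommGroup E] [InnerProductSpace ℝ E] [FiniteDimensional ℝ E]
  [MeasurableSpace E] [BorelSpace E]

theorem rpow_one_div_le_mul_rpow_one_div_iff {L R K : ℝ≥0∞} {p : ℝ} (hp : 0 < p) :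
    L ^ (1 / p) ≤ K * R ^ (1 / p) ↔ L ≤ K ^ p * R := by
  rw [one_div, ENNReal.rpow_inv_le_iff hp, ENNReal.mul_rpow_of_nonneg _ _ hp.le,
    ENNReal.rpow_inv_rpow hp.ne']

theorem isLeast_funkConst {m : ℕ} (hE : finrank ℝ E = m + 1) (hm : 1 ≤ m) {e : E} (he : ‖e‖ = 1)
    {a p : ℝ} (ha : -1 < a) (hp : 1 ≤ p) :
    IsLeast {c : ℝ | 0 ≤ c ∧ ∀ φ : sphere (0 : E) 1 → ℝ≥0∞, Measurable φ →
      (∫⁻ w, funkTransform φ w ^ p * zonalPower e (a * p + p - 1) (-(a * p) - m) w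
          ∂sphereUniform E) ^ (1 / p) ≤
        ENNReal.ofReal c *
          (∫⁻ θ, φ θ ^ p * zonalPower e (-(a * p) - 1) (a * p + m * (p - 1)) θ
            ∂sphereUniform E) ^ (1 / p)} (funkConst m a) := by
  have hp_pos : 0 < p := by linarith
  simp only [rpow_one_div_le_mul_rpow_one_div_iff hp_pos]
  exact ⟨⟨(funkConst_pos (by exact_mod_cast hm) ha).le,
      fun φ hφ => lintegral_funkTransform_rpow_mul_zonalPower_le hE hm he ha hp hφ⟩,
    fun c hc => funkConst_le_of_lintegral_le hE hm he ha hp_pos hc.1 hc.2⟩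

theorem stmt14_general {n : ℕ} (hn : 2 ≤ n) (hE : finrank ℝ E = n) {e : E} (he : ‖e‖ = 1) {p : ℝ}
    (hp : 1 ≤ p) {μ ν c₁ : ℝ}
    (hμ : μ > ((n : ℝ) - 1) - (n : ℝ) / p - (1 - 1 / p))
    (hν : ν = μ - ((n : ℝ) - 2) * (1 - 1 / p))
    (hc : c₁ = Gamma (((n : ℝ) - 1) / 2) / Gamma (1 / 2) *
      Gamma ((μ + (n : ℝ) / p - ((n : ℝ) - 1) + (1 - 1 / p)) / 2) /
      Gamma ((μ + (n : ℝ) / p - 1 / p) / 2)) :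
    IsLeast {c : ℝ | 0 ≤ c ∧ ∀ φ : sphere (0 : E) 1 → ℝ≥0∞, Measurable φ →
      (∫⁻ w, funkTransform φ w ^ p * ENNReal.ofReal |inner ℝ (w : E) e| ^ (ν * p) *
          ENNReal.ofReal (1 - inner ℝ (w : E) e ^ 2) ^ (((1 - ν) * p - n) / 2)
          ∂sphereUniform E) ^ (1 / p) ≤
        ENNReal.ofReal c *
          (∫⁻ θ, φ θ ^ p * ENNReal.ofReal (1 - inner ℝ (θ : E) e ^ 2) ^ (μ * p / 2) *
            ENNReal.ofReal |inner ℝ (θ : E) e| ^ (((n : ℝ) - 1 - μ) * p - n)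
            ∂sphereUniform E) ^ (1 / p)} c₁ := by
  obtain ⟨m, rfl⟩ : ∃ m, n = m + 1 := ⟨n - 1, by lia⟩
  push_cast at hμ hν hc ⊢
  obtain ⟨a, rfl⟩ : ∃ a, μ = a + m - m / p := ⟨μ - m + m / p, by ring⟩
  have ha : -1 < a := by
    rw [add_div] at hμ
    linarith
  have hconst : c₁ = funkConst m a := by
    rw [hc, funkConst]
    ring_nf
  have hleft_height : ν * p = a * p + p - 1 := by
    rw [hν]
    field_simp
    ring
  have hleft_width : (1 - ν) * p - (m + 1) = -(a * p) - m := by linarith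
  have hright_width : (a + m - m / p) * p = a * p + m * (p - 1) := by
    field_simp
    ring
  have hright_height : ((m : ℝ) + 1 - 1 - (a + m - m / p)) * p - (m + 1) = -(a * p) - 1 := by
    field_simp
    ring
  have hleft (φ : sphere (0 : E) 1 → ℝ≥0∞) (w : sphere (0 : E) 1) :
      funkTransform φ w ^ p * ENNReal.ofReal |inner ℝ (w : E) e| ^ (ν * p) *
          ENNReal.ofReal (1 - inner ℝ (w : E) e ^ 2) ^ (((1 - ν) * p - (m + 1)) / 2) =
        funkTransform φ w ^ p * zonalPower e (a * p + p - 1) (-(a * p) - m) w := by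
    rw [mul_assoc, hleft_height, hleft_width, zonalPower]
  have hright (φ : sphere (0 : E) 1 → ℝ≥0∞) (θ : sphere (0 : E) 1) :
      φ θ ^ p * ENNReal.ofReal (1 - inner ℝ (θ : E) e ^ 2) ^ ((a + m - m / p) * p / 2) *
          ENNReal.ofReal |inner ℝ (θ : E) e| ^ (((m : ℝ) + 1 - 1 - (a + m - m / p)) * p - (m + 1)) =
        φ θ ^ p * zonalPower e (-(a * p) - 1) (a * p + m * (p - 1)) θ := by
    rw [mul_assoc, hright_height, hright_width, zonalPower, mul_comm (_ ^ (_ / 2))]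
  simpa only [hleft, hright, hconst] using isLeast_funkConst hE (by lia) he ha hp

end SharpConstant

/-- Weighted norm inequality, with sharp constant `c₁`, for the codimension-one Funk transform
(case `k = n-1` of the weighted estimate obtained by stereographic projection); `w_n` denotes
the last coordinate, and `sin d(w^⊥) = |w_n|`, `cos d(w^⊥) = (1-w_n²)^{1/2}`. -/
theorem stmt14 (n : ℕ) (hn : 3 ≤ n) (p : ℝ) (hp : 1 ≤ p) (μ ν c₁ : ℝ)
    (hμ : μ > ((n : ℝ) - 1) - (n : ℝ) / p - (1 - 1 / p))
    (hν : ν = μ - ((n : ℝ) - 2) * (1 - 1 / p))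
    (hc : c₁ = Real.Gamma (((n : ℝ) - 1) / 2) / Real.Gamma (1 / 2) *
      Real.Gamma ((μ + (n : ℝ) / p - ((n : ℝ) - 1) + (1 - 1 / p)) / 2) /
      Real.Gamma ((μ + (n : ℝ) / p - 1 / p) / 2)) :
    (∀ φ : sphere (0 : EuclideanSpace ℝ (Fin n)) 1 → ℝ≥0∞, Measurable φ →
      (∫⁻ w, Funk n φ w ^ p *
          ENNReal.ofReal |(w : EuclideanSpace ℝ (Fin n)) ⟨n - 1, by omega⟩| ^ (ν * p) *
          ENNReal.ofReal (1 - ((w : EuclideanSpace ℝ (Fin n)) ⟨n - 1, by omega⟩) ^ 2) ^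
            (((1 - ν) * p - n) / 2) ∂(sphMeasure n)) ^ (1 / p) ≤
        ENNReal.ofReal c₁ *
          (∫⁻ θ, φ θ ^ p *
            ENNReal.ofReal (1 - ((θ : EuclideanSpace ℝ (Fin n)) ⟨n - 1, by omega⟩) ^ 2) ^
              (μ * p / 2) *
            ENNReal.ofReal |(θ : EuclideanSpace ℝ (Fin n)) ⟨n - 1, by omega⟩| ^
              (((n : ℝ) - 1 - μ) * p - n) ∂(sphMeasure n)) ^ (1 / p)) ∧
    (∀ c' : ℝ, 0 ≤ c' →
      (∀ φ : sphere (0 : EuclideanSpace ℝ (Fin n)) 1 → ℝ≥0∞, Measurable φ →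
        (∫⁻ w, Funk n φ w ^ p *
            ENNReal.ofReal |(w : EuclideanSpace ℝ (Fin n)) ⟨n - 1, by omega⟩| ^ (ν * p) *
            ENNReal.ofReal (1 - ((w : EuclideanSpace ℝ (Fin n)) ⟨n - 1, by omega⟩) ^ 2) ^
              (((1 - ν) * p - n) / 2) ∂(sphMeasure n)) ^ (1 / p) ≤
          ENNReal.ofReal c' *
            (∫⁻ θ, φ θ ^ p *
              ENNReal.ofReal (1 - ((θ : EuclideanSpace ℝ (Fin n)) ⟨n - 1, by omega⟩) ^ 2) ^
                (μ * p / 2) *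
              ENNReal.ofReal |(θ : EuclideanSpace ℝ (Fin n)) ⟨n - 1, by omega⟩| ^
                (((n : ℝ) - 1 - μ) * p - n) ∂(sphMeasure n)) ^ (1 / p)) →
      c₁ ≤ c') := by
  have he : ‖EuclideanSpace.single (⟨n - 1, by omega⟩ : Fin n) (1 : ℝ)‖ = 1 := by simp
  have hleast := stmt14_general (by omega) finrank_euclideanSpace_fin he hp hμ hν hc
  have hfunk (φ : sphere (0 : EuclideanSpace ℝ (Fin n)) 1 → ℝ≥0∞) : funkTransform φ = Funk n φ :=
    funext fun w => lintegral_smul_measure ..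
  simp only [EuclideanSpace.inner_single_right, hfunk, one_mul, conj_trivial] at hleast
  exact ⟨hleast.1.2, fun c' hc' h => hleast.2 ⟨hc', h⟩⟩
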